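/- arXiv:2603.21671 — 2 statements merged into one kernel-verified Lean document; each statement's English description precedes it below -/
import Mathlib

section
/- Let f : ℝ^d → ℝ be a convex function and suppose μ_{ij} (1 ≤ i,j ≤ d) are locally finite Borel measures (signed for i ≠ j) on ℝ^d satisfying ∫_{ℝ^d} φ dμ_{ij} = ∫_{ℝ^d} f(x) ∂_i∂_j φ(x) dx for every φ ∈ C_c^∞(ℝ^d). Let Q_{ij}(x) = dμ_{ij}/dx denote the Radon–Nikodym derivative of the absolutely continuous part of μ_{ij} with respect to Lebesgue measure. Then for Lebesgue-almost every x ∈ ℝ^d the matrix Q(x) = (Q_{ij}(x))_{ij} is positive semidefinite. -/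
open MeasureTheory Filter Metric
open scoped Topology ENNReal NNReal RealInnerProductSpace

noncomputable def secondPartial (d : ℕ) (φ : EuclideanSpace ℝ (Fin d) → ℝ)
    (i j : Fin d) (x : EuclideanSpace ℝ (Fin d)) : ℝ :=
  fderiv ℝ (fun z => fderiv ℝ φ z (EuclideanSpace.single j 1)) x (EuclideanSpace.single i 1)

/-- `μp, μn` represent the (signed) second derivative measures `μ_{ij} = μp i j - μn i j`
of the convex function `f`. -/
def IsSecondDerivMeasures (d : ℕ) (f : EuclideanSpace ℝ (Fin d) → ℝ)
    (μp μn : Fin d → Fin d → Measure (EuclideanSpace ℝ (Fin d))) : Prop :=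
  (∀ i j, IsLocallyFiniteMeasure (μp i j)) ∧ (∀ i j, IsLocallyFiniteMeasure (μn i j)) ∧
  ∀ i j, ∀ φ : EuclideanSpace ℝ (Fin d) → ℝ, ContDiff ℝ (⊤ : ℕ∞) φ → HasCompactSupport φ →
    (∫ x, φ x ∂(μp i j)) - (∫ x, φ x ∂(μn i j)) = ∫ x, f x * secondPartial d φ i j x

/-- the matrix of Radon–Nikodym derivatives of the absolutely continuous parts. -/
noncomputable def densityMatrix (d : ℕ)
    (μp μn : Fin d → Fin d → Measure (EuclideanSpace ℝ (Fin d)))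
    (x : EuclideanSpace ℝ (Fin d)) : Matrix (Fin d) (Fin d) ℝ :=
  Matrix.of fun i j =>
    ((μp i j).rnDeriv volume x).toReal - ((μn i j).rnDeriv volume x).toReal

/-!
For a direction `v` and a test function `φ ≥ 0`, the function `t ↦ ∫ f(y) φ(y + t v) dy` is an
average of the convex functions `t ↦ f(y - t v)`, hence convex, so its second derivative at `0`,
`∫ f ∂_v∂_v φ = ∑ v_i v_j ∫ φ dμ_ij`, is nonnegative. Letting `φ` tend to the indicator of a
closed ball gives `∑ v_i v_j μ_ij(B) ≥ 0` for every ball `B`. Dividing by the volume of `B` and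
shrinking `B` to a point, the Besicovitch differentiation theorem yields `vᵀ Q(x) v ≥ 0` for almost
every `x`. The exceptional set depends on `v`, so one takes `v` in a countable dense set and
concludes by continuity in `v`. The same passage from test functions to densities turns the
symmetry of `∂_i∂_j φ` into that of `Q`.
-/

open scoped Matrix

section TestFunctions

variable {E : Type*} [NormedAddCommGroup E] [NormedSpace ℝ E] [FiniteDimensional ℝ E]
  [MeasurableSpace E] [BorelSpace E]

lemma tendsto_integral_contDiffBump {ι : Type*} {l : Filter ι} [l.IsCountablyGenerated]
    (μ : Measure E) [IsLocallyFiniteMeasure μ] {x : E} {r : ℝ} {φ : ι → ContDiffBump x}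
    (hIn : ∀ i, (φ i).rIn = r) (hOut : Tendsto (fun i => (φ i).rOut) l (𝓝 r)) :
    Tendsto (fun i => ∫ y, φ i y ∂μ) l (𝓝 (μ.real (closedBall x r))) := by
  rw [← integral_indicator_one measurableSet_closedBall]
  refine tendsto_integral_filter_of_dominated_convergence
    ((closedBall x (r + 1)).indicator 1) (.of_forall fun i => ?_) ?_ ?_ (ae_of_all _ fun y => ?_)
  · exact (φ i).continuous.aestronglyMeasurable
  · filter_upwards [hOut.eventually_le_const (lt_add_one r)] with i hi
    refine ae_of_all _ fun y => ?_
    rw [Real.norm_of_nonneg (φ i).nonneg]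
    by_cases hy : y ∈ closedBall x (r + 1)
    · simpa [hy] using (φ i).le_one
    · simpa [hy] using ((φ i).zero_of_le_dist (hi.trans (not_le.1 hy).le)).le
  · exact (integrable_indicator_iff measurableSet_closedBall).2
      (integrableOn_const (isCompact_closedBall x (r + 1)).measure_lt_top.ne)
  · by_cases hy : y ∈ closedBall x r
    · have : ∀ i, φ i y = 1 := fun i => (φ i).one_of_mem_closedBall (by rwa [hIn])
      simpa [hy, this] using tendsto_const_nhds
    · have : ∀ᶠ i in l, φ i y = 0 := by
        filter_upwards [hOut.eventually_le_const (not_le.1 hy)] with i hi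
        exact (φ i).zero_of_le_dist hi
      simpa [hy] using tendsto_const_nhds.congr' (this.mono fun _ h => h.symm)

variable {ι : Type*} [Fintype ι] {c : ι → ℝ} {M : ι → Measure E}
  [∀ i, IsLocallyFiniteMeasure (M i)]

lemma sum_mul_measureReal_closedBall_nonneg
    (hM : ∀ φ : E → ℝ, ContDiff ℝ (⊤ : ℕ∞) φ → HasCompactSupport φ → (∀ x, 0 ≤ φ x) →
      0 ≤ ∑ i, c i * ∫ x, φ x ∂M i) (x : E) {r : ℝ} (hr : 0 < r) :
    0 ≤ ∑ i, c i * (M i).real (closedBall x r) := by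
  obtain ⟨φ, hIn, hOut⟩ : ∃ φ : ℕ → ContDiffBump x,
      (∀ n, (φ n).rIn = r) ∧ Tendsto (fun n => (φ n).rOut) atTop (𝓝 r) := by
    refine ⟨fun n => ⟨r, r + 1 / (n + 1), hr, lt_add_of_pos_right r Nat.one_div_pos_of_nat⟩,
      fun _ => rfl, ?_⟩
    simpa using tendsto_one_div_add_atTop_nhds_zero_nat.const_add r
  have hlim : Tendsto (fun n => ∑ i, c i * ∫ y, φ n y ∂M i) atTop
      (𝓝 (∑ i, c i * (M i).real (closedBall x r))) :=
    tendsto_finsetSum _ fun i _ =>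
      (tendsto_integral_contDiffBump (M i) hIn hOut).const_mul (c i)
  exact ge_of_tendsto' hlim fun n =>
    hM (φ n) (φ n).contDiff (φ n).hasCompactSupport (φ n).nonneg'

theorem ae_sum_mul_toReal_rnDeriv_nonneg (ν : Measure E) [IsLocallyFiniteMeasure ν]
    (hM : ∀ φ : E → ℝ, ContDiff ℝ (⊤ : ℕ∞) φ → HasCompactSupport φ → (∀ x, 0 ≤ φ x) →
      0 ≤ ∑ i, c i * ∫ x, φ x ∂M i) :
    ∀ᵐ x ∂ν, 0 ≤ ∑ i, c i * ((M i).rnDeriv ν x).toReal := by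
  have hdiff : ∀ᵐ x ∂ν, ∀ i, Tendsto
      (fun r => (M i).real (closedBall x r) / ν.real (closedBall x r)) (𝓝[>] 0)
      (𝓝 ((M i).rnDeriv ν x).toReal) := by
    refine ae_all_iff.2 fun i => ?_
    filter_upwards [Besicovitch.ae_tendsto_rnDeriv (M i) ν, (M i).rnDeriv_lt_top ν]
      with x hx hfin
    simpa only [measureReal_def, ← ENNReal.toReal_div, Function.comp_def] using
      (ENNReal.tendsto_toReal hfin.ne).comp hx
  filter_upwards [hdiff] with x hx
  refine ge_of_tendsto (tendsto_finsetSum _ fun i _ => (hx i).const_mul (c i)) ?_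
  filter_upwards [self_mem_nhdsWithin] with r hr
  simp only [← mul_div_assoc, ← Finset.sum_div]
  exact div_nonneg (sum_mul_measureReal_closedBall_nonneg hM x hr) measureReal_nonneg

theorem ae_sum_mul_toReal_rnDeriv_sub_nonneg {P N : ι → Measure E}
    [∀ i, IsLocallyFiniteMeasure (P i)] [∀ i, IsLocallyFiniteMeasure (N i)]
    (ν : Measure E) [IsLocallyFiniteMeasure ν]
    (hPN : ∀ φ : E → ℝ, ContDiff ℝ (⊤ : ℕ∞) φ → HasCompactSupport φ → (∀ x, 0 ≤ φ x) →
      0 ≤ ∑ i, c i * (∫ x, φ x ∂P i - ∫ x, φ x ∂N i)) :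
    ∀ᵐ x ∂ν, 0 ≤ ∑ i, c i * (((P i).rnDeriv ν x).toReal - ((N i).rnDeriv ν x).toReal) := by
  have : ∀ q, IsLocallyFiniteMeasure (Sum.elim P N q) :=
    Sum.rec (fun i => inferInstanceAs (IsLocallyFiniteMeasure (P i)))
      fun i => inferInstanceAs (IsLocallyFiniteMeasure (N i))
  have hae := ae_sum_mul_toReal_rnDeriv_nonneg (c := Sum.elim c (-c)) (M := Sum.elim P N) ν
    fun φ hφ hφc hφ0 => by
      simpa [mul_sub, ← sub_eq_add_neg] using hPN φ hφ hφc hφ0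
  simpa [mul_sub, ← sub_eq_add_neg] using hae

end TestFunctions

lemma convexOn_integral {V α : Type*} [AddCommGroup V] [Module ℝ V] [MeasurableSpace α]
    {μ : Measure α} {s : Set V} {F : V → α → ℝ} (hs : Convex ℝ s)
    (hF : ∀ᵐ a ∂μ, ConvexOn ℝ s fun v => F v a) (hint : ∀ v ∈ s, Integrable (F v) μ) :
    ConvexOn ℝ s fun v => ∫ a, F v a ∂μ := by
  refine ⟨hs, fun v hv w hw a b ha hb hab => ?_⟩
  have hav := (hint v hv).fun_smul a
  have hbw := (hint w hw).fun_smul b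
  calc ∫ y, F (a • v + b • w) y ∂μ
      ≤ ∫ y, (a • F v y + b • F w y) ∂μ :=
        integral_mono_ae (hint _ (hs hv hw ha hb hab)) (hav.add hbw)
          (hF.mono fun y hy => hy.2 hv hw ha hb hab)
    _ = a • ∫ y, F v y ∂μ + b • ∫ y, F w y ∂μ := by
        rw [integral_add hav hbw, integral_smul, integral_smul]

section DirectionalDerivatives

variable {E F : Type*} [NormedAddCommGroup E] [NormedSpace ℝ E] [NormedAddCommGroup F]
  [NormedSpace ℝ F]

lemma contDiff_fderiv_apply_const {φ : E → F} {m n : WithTop ℕ∞} (hφ : ContDiff ℝ n φ)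
    (hmn : m + 1 ≤ n) (v : E) :
    ContDiff ℝ m fun z => fderiv ℝ φ z v :=
  (hφ.fderiv_right hmn).clm_apply contDiff_const

lemma fderiv_fderiv_apply_const {φ : E → F} {x : E}
    (hφ : DifferentiableAt ℝ (fderiv ℝ φ) x) (v w : E) :
    fderiv ℝ (fun z => fderiv ℝ φ z v) x w = fderiv ℝ (fderiv ℝ φ) x w v := by
  simp [fderiv_clm_apply hφ (differentiableAt_const v)]

variable [MeasurableSpace E] [BorelSpace E] {μ : Measure E} {f φ : E → ℝ}

lemma hasDerivAt_integral_mul_comp_add_smul [SFinite μ] [μ.IsAddLeftInvariant]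
    (hf : LocallyIntegrable f μ) (hφ : ContDiff ℝ 1 φ) (hφc : HasCompactSupport φ) (v : E) (t : ℝ) :
    HasDerivAt (fun t : ℝ => ∫ y, f y * φ (y + t • v) ∂μ)
      (∫ y, f y * fderiv ℝ φ (y + t • v) v ∂μ) t := by
  have hψ : ContDiff ℝ 1 fun y => φ (-y) := hφ.comp contDiff_neg
  have hψc : HasCompactSupport fun y => φ (-y) := hφc.comp_homeomorph (Homeomorph.neg E)
  have hψ' (y : E) : fderiv ℝ (fun y => φ (-y)) y (-v) = fderiv ℝ φ (-y) v := by
    have h := (hφ.differentiable one_ne_zero (-y)).hasFDerivAt.comp y (hasFDerivAt_id y).neg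
    simp [show fderiv ℝ (fun y => φ (-y)) y = _ from h.fderiv]
  have hline : HasDerivAt (fun t : ℝ => -(t • v)) (-v) t := by
    simpa using ((hasDerivAt_id t).smul_const v).fun_neg
  -- The integral is the convolution of `f` with the reflection of `φ`, evaluated at `-(t • v)`.
  have hconv := (hψc.hasFDerivAt_convolution_right (ContinuousLinearMap.lsmul ℝ ℝ) hf hψ
    (-(t • v))).comp_hasDerivAt t hline
  rw [convolution_precompR_apply _ hf (hψc.fderiv ℝ) (hψ.continuous_fderiv one_ne_zero)] at hconv
  simpa [convolution_def, Function.comp_def, hψ', add_comm] using hconv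

variable [FiniteDimensional ℝ E] [μ.IsAddHaarMeasure]

lemma convexOn_integral_mul_comp_add_smul (hf : ConvexOn ℝ Set.univ f) (hφ : Continuous φ)
    (hφc : HasCompactSupport φ) (hφ0 : ∀ x, 0 ≤ φ x) (v : E) :
    ConvexOn ℝ Set.univ fun t : ℝ => ∫ y, f y * φ (y + t • v) ∂μ := by
  have hfc : Continuous f := hf.locallyLipschitz.continuous
  have htranslate (t : ℝ) : ∫ y, f y * φ (y + t • v) ∂μ = ∫ y, φ y * f (y - t • v) ∂μ := by
    rw [← integral_sub_right_eq_self _ (t • v)]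
    simp only [sub_add_cancel, mul_comm]
  simp only [htranslate]
  refine convexOn_integral convex_univ (ae_of_all _ fun y => ?_) fun t _ =>
    Continuous.integrable_of_hasCompactSupport (by fun_prop) hφc.mul_right
  have hline := hf.comp_affineMap (AffineMap.lineMap y (y - v))
  simpa [Function.comp_def, AffineMap.lineMap_apply, sub_eq_neg_add, add_comm]
    using hline.smul (hφ0 y)

theorem integral_mul_fderiv_fderiv_nonneg (hf : ConvexOn ℝ Set.univ f) (hφ : ContDiff ℝ 2 φ)
    (hφc : HasCompactSupport φ) (hφ0 : ∀ x, 0 ≤ φ x) (v : E) :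
    0 ≤ ∫ x, f x * fderiv ℝ (fun z => fderiv ℝ φ z v) x v ∂μ := by
  have hfi : LocallyIntegrable f μ := hf.locallyLipschitz.continuous.locallyIntegrable
  have hderiv := hasDerivAt_integral_mul_comp_add_smul hfi (hφ.of_le one_le_two) hφc v
  have hderiv₂ := hasDerivAt_integral_mul_comp_add_smul hfi
    (contDiff_fderiv_apply_const hφ one_add_one_eq_two.le v) (hφc.fderiv_apply ℝ v) v 0
  have hmono : Monotone fun t : ℝ => ∫ y, f y * fderiv ℝ φ (y + t • v) v ∂μ := by
    have hconvex := convexOn_integral_mul_comp_add_smul (μ := μ) hf hφ.continuous hφc hφ0 v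
    simpa only [← monotoneOn_univ, funext fun t => (hderiv t).deriv] using
      hconvex.monotoneOn_deriv fun t _ => (hderiv t).differentiableAt
  have hnonneg := hmono.deriv_nonneg (x := 0)
  rw [hderiv₂.deriv] at hnonneg
  simpa using hnonneg

end DirectionalDerivatives

theorem ae_posSemidef_of_forall_ae_nonneg {α n : Type*} [MeasurableSpace α] [Fintype n]
    {μ : Measure α} {Q : α → Matrix n n ℝ} (hherm : ∀ᵐ x ∂μ, (Q x).IsHermitian)
    (hnonneg : ∀ v : n → ℝ, ∀ᵐ x ∂μ, 0 ≤ v ⬝ᵥ Q x *ᵥ v) : ∀ᵐ x ∂μ, (Q x).PosSemidef := by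
  have hdense : ∀ᵐ x ∂μ, ∀ k, 0 ≤ TopologicalSpace.denseSeq (n → ℝ) k ⬝ᵥ
      Q x *ᵥ TopologicalSpace.denseSeq (n → ℝ) k := ae_all_iff.2 fun k => hnonneg _
  filter_upwards [hherm, hdense] with x hx hxdense
  have hclosed : IsClosed {v : n → ℝ | 0 ≤ v ⬝ᵥ Q x *ᵥ v} :=
    isClosed_le continuous_const (by fun_prop)
  refine .of_dotProduct_mulVec_nonneg hx fun v => ?_
  exact (TopologicalSpace.denseRange_denseSeq _).induction_on v hclosed hxdense

section SecondDerivMeasures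

variable {d : ℕ} {φ : EuclideanSpace ℝ (Fin d) → ℝ}

lemma secondPartial_eq_fderiv_fderiv (hφ : ContDiff ℝ 2 φ) (i j : Fin d)
    (x : EuclideanSpace ℝ (Fin d)) :
    secondPartial d φ i j x = fderiv ℝ (fderiv ℝ φ) x (EuclideanSpace.single i 1)
      (EuclideanSpace.single j 1) :=
  fderiv_fderiv_apply_const
    ((hφ.fderiv_right one_add_one_eq_two.le).differentiable one_ne_zero x) _ _

lemma secondPartial_comm (hφ : ContDiff ℝ 2 φ) (i j : Fin d) :
    secondPartial d φ i j = secondPartial d φ j i := by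
  ext x
  rw [secondPartial_eq_fderiv_fderiv hφ, secondPartial_eq_fderiv_fderiv hφ]
  exact (hφ.contDiffAt.isSymmSndFDerivAt (by simp)).eq _ _

lemma fderiv_fderiv_apply_eq_sum_secondPartial (hφ : ContDiff ℝ 2 φ)
    (v x : EuclideanSpace ℝ (Fin d)) :
    fderiv ℝ (fun z => fderiv ℝ φ z v) x v =
      ∑ i, ∑ j, v i * v j * secondPartial d φ i j x := by
  have hv : v = ∑ i, v i • EuclideanSpace.single i (1 : ℝ) := by
    simpa using ((EuclideanSpace.basisFun (Fin d) ℝ).sum_repr v).symm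
  rw [fderiv_fderiv_apply_const
    ((hφ.fderiv_right one_add_one_eq_two.le).differentiable one_ne_zero x)]
  conv_lhs => rw [hv]
  simp only [map_sum, map_smul, _root_.sum_apply, _root_.smul_apply, smul_eq_mul, Finset.mul_sum,
    secondPartial_eq_fderiv_fderiv hφ]
  rw [Finset.sum_comm]
  simp only [mul_left_comm, mul_assoc]

lemma integrable_mul_secondPartial {μ : Measure (EuclideanSpace ℝ (Fin d))}
    [IsLocallyFiniteMeasure μ] {f : EuclideanSpace ℝ (Fin d) → ℝ} (hf : Continuous f)
    (hφ : ContDiff ℝ 2 φ) (hφc : HasCompactSupport φ) (i j : Fin d) :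
    Integrable (fun x => f x * secondPartial d φ i j x) μ := by
  have hcont : Continuous (secondPartial d φ i j) :=
    (contDiff_fderiv_apply_const (m := 0)
      (contDiff_fderiv_apply_const hφ one_add_one_eq_two.le _) (zero_add 1).le _).continuous
  have hsupp : HasCompactSupport (secondPartial d φ i j) :=
    (hφc.fderiv_apply ℝ _).fderiv_apply ℝ _
  exact (hf.mul hcont).integrable_of_hasCompactSupport hsupp.mul_left

theorem sum_mul_integral_secondPartial_nonneg {f : EuclideanSpace ℝ (Fin d) → ℝ}
    (hf : ConvexOn ℝ Set.univ f) (hφ : ContDiff ℝ 2 φ) (hφc : HasCompactSupport φ)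
    (hφ0 : ∀ x, 0 ≤ φ x) (v : Fin d → ℝ) :
    0 ≤ ∑ i, ∑ j, v i * v j * ∫ x, f x * secondPartial d φ i j x := by
  have hint (i j : Fin d) : Integrable fun x => v i * v j * (f x * secondPartial d φ i j x) :=
    (integrable_mul_secondPartial hf.locallyLipschitz.continuous hφ hφc i j).const_mul _
  calc 0 ≤ ∫ x, f x * fderiv ℝ (fun z => fderiv ℝ φ z (WithLp.toLp 2 v)) x (WithLp.toLp 2 v) :=
        integral_mul_fderiv_fderiv_nonneg hf hφ hφc hφ0 _
    _ = ∫ x, ∑ i, ∑ j, v i * v j * (f x * secondPartial d φ i j x) := by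
        simp only [fderiv_fderiv_apply_eq_sum_secondPartial hφ, Finset.mul_sum, mul_left_comm (f _)]
    _ = ∑ i, ∑ j, v i * v j * ∫ x, f x * secondPartial d φ i j x := by
        rw [integral_finsetSum _ fun i _ => integrable_finsetSum _ fun j _ => hint i j]
        simp only [integral_finsetSum _ fun j _ => hint _ j, integral_const_mul]

namespace IsSecondDerivMeasures

variable {f : EuclideanSpace ℝ (Fin d) → ℝ}
  {μp μn : Fin d → Fin d → Measure (EuclideanSpace ℝ (Fin d))}

theorem ae_sum_mul_densityMatrix_nonneg (hμ : IsSecondDerivMeasures d f μp μn)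
    {c : Fin d → Fin d → ℝ}
    (hc : ∀ φ : EuclideanSpace ℝ (Fin d) → ℝ, ContDiff ℝ (⊤ : ℕ∞) φ → HasCompactSupport φ →
      (∀ x, 0 ≤ φ x) → 0 ≤ ∑ i, ∑ j, c i j * ∫ x, f x * secondPartial d φ i j x) :
    ∀ᵐ x, 0 ≤ ∑ i, ∑ j, c i j * densityMatrix d μp μn x i j := by
  obtain ⟨hp, hn, hrep⟩ := hμ
  have hae := ae_sum_mul_toReal_rnDeriv_sub_nonneg (ι := Fin d × Fin d) volume
    (c := fun p => c p.1 p.2) (P := fun p => μp p.1 p.2) (N := fun p => μn p.1 p.2)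
    fun φ hφ hφc hφ0 => by
      simpa only [hrep _ _ φ hφ hφc, Fintype.sum_prod_type] using hc φ hφ hφc hφ0
  simpa only [Fintype.sum_prod_type, densityMatrix, Matrix.of_apply] using hae

theorem ae_isHermitian_densityMatrix (hμ : IsSecondDerivMeasures d f μp μn) :
    ∀ᵐ x, (densityMatrix d μp μn x).IsHermitian := by
  have hle : ∀ᵐ x, ∀ i j, densityMatrix d μp μn x i j ≤ densityMatrix d μp μn x j i := by
    refine ae_all_iff.2 fun i => ae_all_iff.2 fun j => ?_
    let c : Fin d → Fin d → ℝ := Pi.single j (Pi.single i 1) - Pi.single i (Pi.single j 1)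
    have hsum (a : Fin d → Fin d → ℝ) : ∑ k, ∑ l, c k l * a k l = a j i - a i j := by
      simp [c, Pi.single_apply, ite_apply, sub_mul]
    have hae := hμ.ae_sum_mul_densityMatrix_nonneg (c := c) fun φ hφ _ _ => by
      rw [hsum fun k l => ∫ x, f x * secondPartial d φ k l x,
        secondPartial_comm (contDiff_infty.1 hφ 2) i j, sub_self]
    filter_upwards [hae] with x hx
    rwa [hsum fun k l => densityMatrix d μp μn x k l, sub_nonneg] at hx
  filter_upwards [hle] with x hx
  exact Matrix.IsHermitian.ext fun i j => le_antisymm (hx j i) (hx i j)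

theorem ae_dotProduct_densityMatrix_mulVec_nonneg (hμ : IsSecondDerivMeasures d f μp μn)
    (hf : ConvexOn ℝ Set.univ f) (v : Fin d → ℝ) :
    ∀ᵐ x, 0 ≤ v ⬝ᵥ densityMatrix d μp μn x *ᵥ v := by
  filter_upwards [hμ.ae_sum_mul_densityMatrix_nonneg (c := fun i j => v i * v j)
    fun φ hφ hφc hφ0 => sum_mul_integral_secondPartial_nonneg hf
      (contDiff_infty.1 hφ 2) hφc hφ0 v] with x hx
  simpa only [dotProduct, Matrix.mulVec, Finset.mul_sum, mul_assoc,
    mul_comm (v _) (densityMatrix d μp μn x _ _)] using hx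

end IsSecondDerivMeasures

end SecondDerivMeasures

theorem stmt2 (d : ℕ) (f : EuclideanSpace ℝ (Fin d) → ℝ)
    (hf : ConvexOn ℝ Set.univ f)
    (μp μn : Fin d → Fin d → Measure (EuclideanSpace ℝ (Fin d)))
    (hμ : IsSecondDerivMeasures d f μp μn) :
    ∀ᵐ x ∂(volume : Measure (EuclideanSpace ℝ (Fin d))),
      (densityMatrix d μp μn x).PosSemidef := by
  exact ae_posSemidef_of_forall_ae_nonneg hμ.ae_isHermitian_densityMatrix
    (hμ.ae_dotProduct_densityMatrix_mulVec_nonneg hf)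
end

section
/- Let f : ℝ^d → ℝ be a convex function of at most linear growth, and let ν be the nonnegative locally finite Borel measure with ∫ φ dν = (1/2) ∫_{ℝ^d} f(x) Δφ(x) dx for all φ ∈ C_c^∞(ℝ^d). Then for Lebesgue-almost every x ∈ ℝ^d and every t > 0: (1/t)(∫_{ℝ^d} f(x+y) φ_t(y) dy − f(x)) = (1/t) ∫_0^t ∫_{ℝ^d} (2πs)^{−d/2} e^{−‖x−y‖²/(2s)} ν(dy) ds. -/
open MeasureTheory Filter Metric
open scoped Topology ENNReal NNReal

/-- The `d`-dimensional Gaussian heat kernel `φ_t`. -/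
noncomputable def heatKernel (d : ℕ) (t : ℝ) (y : EuclideanSpace ℝ (Fin d)) : ℝ :=
  (2 * Real.pi * t) ^ (-(d : ℝ) / 2) * Real.exp (-‖y‖ ^ 2 / (2 * t))

/-- The Laplacian `Δφ` at `x`. -/
noncomputable def laplacian (d : ℕ) (φ : EuclideanSpace ℝ (Fin d) → ℝ)
    (x : EuclideanSpace ℝ (Fin d)) : ℝ :=
  ∑ i, secondPartial d φ i i x

/-!
Write `u s = ∫ f (x + y) φ_s(y) dy`. By the heat equation `u' s = ½ ∫ f (x + y) Δφ_s(y) dy`, and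
this equals `∫ φ_s(x - y) ν(dy)` once the defining identity of `ν` is extended from `C_c^∞` to
Gaussians. The extension multiplies the Gaussian by dilated radial cutoffs: dominated convergence
gives the limit of the volume integrals, monotone convergence that of the `ν`-integrals. Since
`u 0⁺ = f x` by continuity of `f`, it remains to integrate `u'` over `(0, t)`; as `u' ≥ 0`, its
integrability up to `0` comes for free.
-/

section PolynomialGrowth

/-- At most polynomial growth of a real function on a normed space, with a bound valid everywhere
rather than only near infinity. The weight `1 + ‖v‖` is submultiplicative under translation. -/
def PolynomiallyBounded {V : Type*} [NormedAddCommGroup V] (F : V → ℝ) : Prop :=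
  ∃ (C : ℝ) (k : ℕ), ∀ v, |F v| ≤ C * (1 + ‖v‖) ^ k

namespace PolynomiallyBounded

variable {V : Type*} [NormedAddCommGroup V] {F G : V → ℝ}

theorem exists_nonneg (hF : PolynomiallyBounded F) :
    ∃ (C : ℝ) (k : ℕ), 0 ≤ C ∧ ∀ v, |F v| ≤ C * (1 + ‖v‖) ^ k := by
  obtain ⟨C, k, hC⟩ := hF
  exact ⟨C, k, by simpa using (abs_nonneg _).trans (hC 0), hC⟩

theorem mul (hF : PolynomiallyBounded F) (hG : PolynomiallyBounded G) :
    PolynomiallyBounded fun v => F v * G v := by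
  obtain ⟨C, k, hC, hF⟩ := hF.exists_nonneg
  obtain ⟨D, l, -, hG⟩ := hG.exists_nonneg
  refine ⟨C * D, k + l, fun v => ?_⟩
  calc |F v * G v| = |F v| * |G v| := abs_mul _ _
    _ ≤ (C * (1 + ‖v‖) ^ k) * (D * (1 + ‖v‖) ^ l) := by gcongr <;> apply_assumption
    _ = C * D * (1 + ‖v‖) ^ (k + l) := by ring

theorem comp_const_add (hF : PolynomiallyBounded F) (x : V) :
    PolynomiallyBounded fun v => F (x + v) := by
  obtain ⟨C, k, hC, hF⟩ := hF.exists_nonneg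
  refine ⟨C * (1 + ‖x‖) ^ k, k, fun v => ?_⟩
  have one_add_norm_add_le : 1 + ‖x + v‖ ≤ (1 + ‖x‖) * (1 + ‖v‖) := by
    nlinarith [norm_add_le x v, norm_nonneg x, norm_nonneg v]
  calc |F (x + v)| ≤ C * (1 + ‖x + v‖) ^ k := hF _
    _ ≤ C * ((1 + ‖x‖) * (1 + ‖v‖)) ^ k := by gcongr
    _ = C * (1 + ‖x‖) ^ k * (1 + ‖v‖) ^ k := by rw [mul_pow, mul_assoc]

theorem of_abs_le_linear {A B : ℝ} (hF : ∀ v, |F v| ≤ A * ‖v‖ + B) : PolynomiallyBounded F := by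
  refine ⟨|A| + |B|, 1, fun v => (hF v).trans ?_⟩
  nlinarith [le_abs_self A, le_abs_self B, abs_nonneg A, abs_nonneg B, norm_nonneg v]

theorem mul_norm_sq_sub (a b : ℝ) : PolynomiallyBounded fun v : V => a * ‖v‖ ^ 2 - b := by
  refine ⟨|a| + |b|, 2, fun v => ?_⟩
  calc |a * ‖v‖ ^ 2 - b| ≤ |a| * ‖v‖ ^ 2 + |b| :=
        (abs_sub _ _).trans_eq (by rw [abs_mul, abs_of_nonneg (sq_nonneg ‖v‖)])
    _ ≤ (|a| + |b|) * (1 + ‖v‖) ^ 2 := by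
        nlinarith [abs_nonneg a, abs_nonneg b, norm_nonneg v, mul_nonneg (abs_nonneg a)
          (norm_nonneg v), mul_nonneg (abs_nonneg b) (norm_nonneg v),
          mul_nonneg (abs_nonneg b) (sq_nonneg ‖v‖)]

end PolynomiallyBounded

theorem one_add_pow_mul_exp_neg_mul_sq_le {b r : ℝ} (hb : 0 < b) (hr : 0 ≤ r) (k : ℕ) :
    (1 + r) ^ k * Real.exp (-b * r ^ 2) ≤
      k.factorial * Real.exp (1 + 1 / (2 * b)) * Real.exp (-(b / 2) * r ^ 2) := by
  have pow_le : (1 + r) ^ k ≤ k.factorial * Real.exp (1 + r) := by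
    rw [← div_le_iff₀' (by positivity)]
    exact Real.pow_div_factorial_le_exp (1 + r) (by positivity) k
  have young : r ≤ 1 / (2 * b) + b / 2 * r ^ 2 := by
    have : 1 / (2 * b) + b / 2 * r ^ 2 - r = (1 - b * r) ^ 2 / (2 * b) := by field_simp; ring
    linarith [show 0 ≤ (1 - b * r) ^ 2 / (2 * b) by positivity]
  calc (1 + r) ^ k * Real.exp (-b * r ^ 2)
      ≤ k.factorial * Real.exp (1 + r) * Real.exp (-b * r ^ 2) := by gcongr
    _ = k.factorial * Real.exp (1 + r - b * r ^ 2) := by rw [mul_assoc, ← Real.exp_add]; ring_nf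
    _ ≤ k.factorial * Real.exp (1 + 1 / (2 * b) + -(b / 2) * r ^ 2) := by gcongr; linarith
    _ = _ := by rw [Real.exp_add, mul_assoc]

variable {V : Type*} [NormedAddCommGroup V] [InnerProductSpace ℝ V] [FiniteDimensional ℝ V]
  [MeasurableSpace V] [BorelSpace V]

theorem integrable_exp_neg_mul_sq_norm {b : ℝ} (hb : 0 < b) :
    Integrable fun v : V => Real.exp (-b * ‖v‖ ^ 2) := by
  refine (GaussianFourier.integrable_cexp_neg_mul_sq_norm_add (b := b) (by simpa using hb) 0
    (0 : V)).norm.congr (.of_forall fun v => ?_)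
  simp [Complex.norm_exp, ← Complex.ofReal_pow]

theorem PolynomiallyBounded.integrable_mul_exp_neg_mul_sq_norm {F : V → ℝ}
    (hF : PolynomiallyBounded F) (hFm : AEStronglyMeasurable F) {b : ℝ} (hb : 0 < b) :
    Integrable fun v => F v * Real.exp (-b * ‖v‖ ^ 2) := by
  obtain ⟨C, k, hC, hF⟩ := hF.exists_nonneg
  refine ((integrable_exp_neg_mul_sq_norm (half_pos hb)).const_mul
    (C * (k.factorial * Real.exp (1 + 1 / (2 * b))))).mono'
    (hFm.mul (by fun_prop)) (.of_forall fun v => ?_)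
  rw [norm_mul, Real.norm_eq_abs, Real.norm_of_nonneg (Real.exp_pos _).le]
  calc |F v| * Real.exp (-b * ‖v‖ ^ 2)
      ≤ C * ((1 + ‖v‖) ^ k * Real.exp (-b * ‖v‖ ^ 2)) := by
        rw [← mul_assoc]; gcongr; exact hF v
    _ ≤ C * (k.factorial * Real.exp (1 + 1 / (2 * b)) * Real.exp (-(b / 2) * ‖v‖ ^ 2)) := by
        exact mul_le_mul_of_nonneg_left
          (one_add_pow_mul_exp_neg_mul_sq_le hb (norm_nonneg v) k) hC
    _ = _ := by ring

end PolynomialGrowth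

section Laplacian

variable {d : ℕ} {φ ψ : EuclideanSpace ℝ (Fin d) → ℝ}

theorem contDiff_fderiv_apply {E G : Type*} [NormedAddCommGroup E] [NormedSpace ℝ E]
    [NormedAddCommGroup G] [NormedSpace ℝ G] {g : E → G} (hg : ContDiff ℝ 2 g) (v : E) :
    ContDiff ℝ 1 fun y => fderiv ℝ g y v :=
  (hg.fderiv_right (m := 1) (by norm_num)).clm_apply contDiff_const

theorem continuous_laplacian (hφ : ContDiff ℝ 2 φ) : Continuous (laplacian d φ) :=
  continuous_finsetSum _ fun _ _ =>
    ((contDiff_fderiv_apply hφ _).continuous_fderiv one_ne_zero).clm_apply continuous_const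

theorem hasCompactSupport_laplacian (hφ : HasCompactSupport φ) :
    HasCompactSupport (laplacian d φ) := by
  refine hφ.mono' fun y hy => ?_
  obtain ⟨i, -, hi⟩ := Finset.exists_ne_zero_of_sum_ne_zero hy
  have hi' : y ∈ tsupport fun z => fderiv ℝ φ z (EuclideanSpace.single i 1) :=
    support_fderiv_subset ℝ fun h => hi (by simp [secondPartial, h])
  exact closure_minimal (fun z hz => support_fderiv_subset ℝ fun h : fderiv ℝ φ z = 0 =>
    (hz : _ ≠ _) (by simp [h])) (isClosed_tsupport φ) hi'

theorem laplacian_comp_smul (c : ℝ) (y : EuclideanSpace ℝ (Fin d)) :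
    laplacian d (fun z => φ (c • z)) y = c ^ 2 * laplacian d φ (c • y) := by
  simp only [laplacian, secondPartial, Finset.mul_sum, fderiv_comp_smul]
  refine Finset.sum_congr rfl fun i _ => ?_
  let partialDeriv (z : EuclideanSpace ℝ (Fin d)) : ℝ := fderiv ℝ φ z (EuclideanSpace.single i 1)
  change fderiv ℝ (c • fun z => partialDeriv (c • z)) y _ = c ^ 2 * fderiv ℝ partialDeriv (c • y) _
  rw [fderiv_const_smul_field, Pi.smul_apply, fderiv_comp_smul, smul_smul, ← sq, smul_apply,
    smul_eq_mul]

theorem laplacian_comp_sub (x y : EuclideanSpace ℝ (Fin d)) :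
    laplacian d (fun z => φ (z - x)) y = laplacian d φ (y - x) := by
  simp only [laplacian, secondPartial, fderiv_comp_sub]
  refine Finset.sum_congr rfl fun i _ => ?_
  rw [fderiv_comp_sub (f := fun z => fderiv ℝ φ z (EuclideanSpace.single i 1))]

theorem secondPartial_mul (hφ : ContDiff ℝ 2 φ) (hψ : ContDiff ℝ 2 ψ) (i : Fin d)
    (y : EuclideanSpace ℝ (Fin d)) :
    secondPartial d (fun z => φ z * ψ z) i i y =
      φ y * secondPartial d ψ i i y +
        2 * (fderiv ℝ φ y (EuclideanSpace.single i 1) * fderiv ℝ ψ y (EuclideanSpace.single i 1)) +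
        secondPartial d φ i i y * ψ y := by
  have hφ' := hφ.differentiable two_ne_zero
  have hψ' := hψ.differentiable two_ne_zero
  have hφi := (contDiff_fderiv_apply hφ (EuclideanSpace.single i 1)).differentiable one_ne_zero
  have hψi := (contDiff_fderiv_apply hψ (EuclideanSpace.single i 1)).differentiable one_ne_zero
  have first_partial (z : EuclideanSpace ℝ (Fin d)) :
      fderiv ℝ (fun z => φ z * ψ z) z (EuclideanSpace.single i 1) =
        φ z * fderiv ℝ ψ z (EuclideanSpace.single i 1) +
          ψ z * fderiv ℝ φ z (EuclideanSpace.single i 1) := by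
    simp [fderiv_fun_mul (hφ' z) (hψ' z)]
  simp only [secondPartial, first_partial]
  rw [fderiv_fun_add ((hφ' y).fun_mul (hψi y)) ((hψ' y).fun_mul (hφi y)),
    fderiv_fun_mul (hφ' y) (hψi y), fderiv_fun_mul (hψ' y) (hφi y)]
  simp only [add_apply, smul_apply, smul_eq_mul]
  ring

theorem laplacian_mul (hφ : ContDiff ℝ 2 φ) (hψ : ContDiff ℝ 2 ψ)
    (y : EuclideanSpace ℝ (Fin d)) :
    laplacian d (fun z => φ z * ψ z) y =
      φ y * laplacian d ψ y +
        2 * ∑ i, fderiv ℝ φ y (EuclideanSpace.single i 1) *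
          fderiv ℝ ψ y (EuclideanSpace.single i 1) +
        laplacian d φ y * ψ y := by
  simp only [laplacian, secondPartial_mul hφ hψ, Finset.sum_add_distrib, Finset.mul_sum,
    Finset.sum_mul]

theorem laplacian_comp_smul_mul (hφ : ContDiff ℝ 2 φ) (hψ : ContDiff ℝ 2 ψ) (c : ℝ)
    (y : EuclideanSpace ℝ (Fin d)) :
    laplacian d (fun z => φ (c • z) * ψ z) y =
      φ (c • y) * laplacian d ψ y +
        2 * c * ∑ i, fderiv ℝ φ (c • y) (EuclideanSpace.single i 1) *
          fderiv ℝ ψ y (EuclideanSpace.single i 1) +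
        c ^ 2 * laplacian d φ (c • y) * ψ y := by
  have hφc : ContDiff ℝ 2 fun z => φ (c • z) := hφ.comp (contDiff_const_smul c)
  rw [laplacian_mul hφc hψ, laplacian_comp_smul]
  simp only [fderiv_comp_smul, smul_apply, smul_eq_mul, mul_assoc, Finset.mul_sum]

theorem abs_sum_fderiv_mul_fderiv_le (y z : EuclideanSpace ℝ (Fin d)) :
    |∑ i, fderiv ℝ φ y (EuclideanSpace.single i 1) * fderiv ℝ ψ z (EuclideanSpace.single i 1)| ≤
      d * (‖fderiv ℝ φ y‖ * ‖fderiv ℝ ψ z‖) := by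
  have partial_le (L : EuclideanSpace ℝ (Fin d) →L[ℝ] ℝ) (i : Fin d) :
      |L (EuclideanSpace.single i 1)| ≤ ‖L‖ := by
    simpa using L.le_opNorm (EuclideanSpace.single i 1)
  refine (Finset.abs_sum_le_sum_abs _ _).trans ?_
  simpa [abs_mul] using Finset.sum_le_card_nsmul Finset.univ _ _ fun i _ =>
    mul_le_mul (partial_le (fderiv ℝ φ y) i) (partial_le (fderiv ℝ ψ z) i) (abs_nonneg _)
      (norm_nonneg _)

theorem exists_abs_laplacian_comp_smul_mul_le (hφ : ContDiff ℝ 2 φ) (hφc : HasCompactSupport φ)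
    (hψ : ContDiff ℝ 2 ψ) :
    ∃ M, ∀ c ∈ Set.Icc (0 : ℝ) 1, ∀ y, |laplacian d (fun z => φ (c • z) * ψ z) y| ≤
      M * (|laplacian d ψ y| + ‖fderiv ℝ ψ y‖ + |ψ y|) := by
  obtain ⟨M₀, hM₀⟩ := hφc.exists_bound_of_continuous hφ.continuous
  obtain ⟨M₁, hM₁⟩ := (hφc.fderiv ℝ).exists_bound_of_continuous (hφ.continuous_fderiv two_ne_zero)
  obtain ⟨M₂, hM₂⟩ :=
    (hasCompactSupport_laplacian hφc).exists_bound_of_continuous (continuous_laplacian hφ)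
  have hM₀' : 0 ≤ M₀ := (norm_nonneg _).trans (hM₀ 0)
  have hM₁' : 0 ≤ M₁ := (norm_nonneg _).trans (hM₁ 0)
  have hM₂' : 0 ≤ M₂ := (norm_nonneg _).trans (hM₂ 0)
  refine ⟨M₀ + 2 * d * M₁ + M₂, fun c ⟨hc₀, hc₁⟩ y => ?_⟩
  have hzeroth : |φ (c • y) * laplacian d ψ y| ≤ M₀ * |laplacian d ψ y| := by
    rw [abs_mul]; gcongr; exact hM₀ _
  have hfirst : |2 * c * ∑ i, fderiv ℝ φ (c • y) (EuclideanSpace.single i 1) *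
      fderiv ℝ ψ y (EuclideanSpace.single i 1)| ≤ 2 * d * M₁ * ‖fderiv ℝ ψ y‖ := by
    rw [abs_mul, abs_of_nonneg (by positivity)]
    calc _ ≤ 2 * 1 * (d * (M₁ * ‖fderiv ℝ ψ y‖)) := by
          gcongr
          exact (abs_sum_fderiv_mul_fderiv_le _ _).trans (by gcongr; exact hM₁ _)
      _ = _ := by ring
  have hsecond : |c ^ 2 * laplacian d φ (c • y) * ψ y| ≤ M₂ * |ψ y| := by
    rw [abs_mul, abs_mul, abs_of_nonneg (by positivity)]
    calc _ ≤ 1 * M₂ * |ψ y| := by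
          gcongr
          · exact pow_le_one₀ hc₀ hc₁
          · exact hM₂ _
      _ = _ := by ring
  rw [laplacian_comp_smul_mul hφ hψ]
  refine (abs_add_three _ _ _).trans ((add_le_add_three hzeroth hfirst hsecond).trans ?_)
  rw [mul_add, mul_add]
  gcongr <;> linarith [show 0 ≤ 2 * d * M₁ by positivity]

theorem tendsto_laplacian_comp_smul_mul (hφ : ContDiff ℝ 2 φ) (hφ₀ : φ 0 = 1)
    (hψ : ContDiff ℝ 2 ψ) (y : EuclideanSpace ℝ (Fin d)) :
    Tendsto (fun c : ℝ => laplacian d (fun z => φ (c • z) * ψ z) y) (𝓝 0)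
      (𝓝 (laplacian d ψ y)) := by
  simp only [laplacian_comp_smul_mul hφ hψ]
  have := hφ.continuous
  have := continuous_laplacian hφ
  have := hφ.continuous_fderiv two_ne_zero
  refine Continuous.tendsto' (by fun_prop) _ _ ?_
  simp [hφ₀]

theorem tendsto_integral_mul_laplacian_comp_smul_mul {f : EuclideanSpace ℝ (Fin d) → ℝ}
    (hf : AEStronglyMeasurable f) (hφ : ContDiff ℝ 2 φ) (hφc : HasCompactSupport φ)
    (hφ₀ : φ 0 = 1) (hψ : ContDiff ℝ 2 ψ) (hfψ : Integrable fun y => f y * ψ y)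
    (hfψ' : Integrable fun y => f y * ‖fderiv ℝ ψ y‖)
    (hfψ'' : Integrable fun y => f y * laplacian d ψ y) :
    Tendsto (fun c : ℝ => ∫ y, f y * laplacian d (fun z => φ (c • z) * ψ z) y) (𝓝[>] 0)
      (𝓝 (∫ y, f y * laplacian d ψ y)) := by
  obtain ⟨M, hM⟩ := exists_abs_laplacian_comp_smul_mul_le hφ hφc hψ
  refine tendsto_integral_filter_of_dominated_convergence
    (fun y => M * (|f y * laplacian d ψ y| + |f y * ‖fderiv ℝ ψ y‖| + |f y * ψ y|))
    (.of_forall fun c => hf.mul ?_) ?_ (((hfψ''.abs.add hfψ'.abs).add hfψ.abs).const_mul M)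
    (.of_forall fun y => ?_)
  · have hprod : ContDiff ℝ 2 fun z => φ (c • z) * ψ z :=
      (hφ.comp (contDiff_const_smul c)).mul hψ
    exact (continuous_laplacian hprod).aestronglyMeasurable
  · filter_upwards [Ioc_mem_nhdsGT one_pos] with c hc
    refine .of_forall fun y => ?_
    calc ‖f y * laplacian d (fun z => φ (c • z) * ψ z) y‖
        ≤ |f y| * (M * (|laplacian d ψ y| + ‖fderiv ℝ ψ y‖ + |ψ y|)) := by
          rw [norm_mul, Real.norm_eq_abs]
          gcongr
          exact hM c ⟨hc.1.le, hc.2⟩ y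
      _ = _ := by simp only [abs_mul, abs_norm]; ring
  · exact ((tendsto_laplacian_comp_smul_mul hφ hφ₀ hψ y).mono_left nhdsWithin_le_nhds).const_mul _

end Laplacian

section Cutoff

variable {V : Type*} [NormedAddCommGroup V]

/-- A smooth radially decreasing cutoff, equal to `1` on the unit ball and supported in the ball of
radius `√2`. The squared norm makes it smooth at the origin, and radial monotonicity makes its
dilations `v ↦ smoothCutoff (c • v)` increase to `1` as `c` decreases to `0`. -/
noncomputable def smoothCutoff (v : V) : ℝ :=
  Real.smoothTransition (2 - ‖v‖ ^ 2)

theorem contDiff_smoothCutoff [InnerProductSpace ℝ V] {n : ℕ∞} :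
    ContDiff ℝ n (smoothCutoff : V → ℝ) :=
  Real.smoothTransition.contDiff.comp (contDiff_const.sub (contDiff_norm_sq ℝ))

theorem continuous_smoothCutoff : Continuous (smoothCutoff : V → ℝ) :=
  Real.smoothTransition.continuous.comp (by fun_prop)

theorem smoothCutoff_nonneg (v : V) : 0 ≤ smoothCutoff v :=
  Real.smoothTransition.nonneg _

theorem smoothCutoff_zero : smoothCutoff (0 : V) = 1 :=
  Real.smoothTransition.one_of_one_le (by norm_num)

theorem smoothCutoff_le_of_norm_le {v w : V} (h : ‖v‖ ≤ ‖w‖) : smoothCutoff w ≤ smoothCutoff v :=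
  Real.smoothTransition.monotone (by gcongr)

theorem hasCompactSupport_smoothCutoff [ProperSpace V] :
    HasCompactSupport (smoothCutoff : V → ℝ) := by
  refine .intro (isCompact_closedBall 0 2) fun v hv => Real.smoothTransition.zero_of_nonpos ?_
  have : 2 < ‖v‖ := by simpa using hv
  nlinarith

theorem tendsto_lintegral_smoothCutoff_mul [NormedSpace ℝ V] [MeasurableSpace V] [BorelSpace V]
    (ν : Measure V) {ψ : V → ℝ} (hψ : Measurable ψ) (hψ₀ : ∀ y, 0 ≤ ψ y) :
    Tendsto (fun n : ℕ => ∫⁻ y, .ofReal (smoothCutoff ((1 / ((n : ℝ) + 1)) • y) * ψ y) ∂ν) atTop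
      (𝓝 (∫⁻ y, .ofReal (ψ y) ∂ν)) := by
  have hcutoff : Continuous (smoothCutoff : V → ℝ) := continuous_smoothCutoff
  refine lintegral_tendsto_of_tendsto_of_monotone (fun n => ?_) (.of_forall fun y m n hmn => ?_)
    (.of_forall fun y => ?_)
  · exact ((hcutoff.comp (continuous_const_smul _)).measurable.mul hψ).ennreal_ofReal.aemeasurable
  · refine ENNReal.ofReal_le_ofReal
      (mul_le_mul_of_nonneg_right (smoothCutoff_le_of_norm_le ?_) (hψ₀ y))
    rw [norm_smul, norm_smul, Real.norm_of_nonneg (by positivity),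
      Real.norm_of_nonneg (by positivity)]
    gcongr
  · have hlim : Tendsto (fun c : ℝ => smoothCutoff (c • y) * ψ y) (𝓝 0) (𝓝 (ψ y)) :=
      Continuous.tendsto' (by fun_prop) _ _ (by simp [smoothCutoff_zero])
    exact ENNReal.tendsto_ofReal (hlim.comp tendsto_one_div_add_atTop_nhds_zero_nat)

end Cutoff

section WeakEquation

variable {d : ℕ}

/-- The measure `ν` is half the distributional Laplacian of `f`, tested against `C_c^∞`. -/
def IsHalfLaplacian (ν : Measure (EuclideanSpace ℝ (Fin d))) (f : EuclideanSpace ℝ (Fin d) → ℝ) :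
    Prop :=
  ∀ φ : EuclideanSpace ℝ (Fin d) → ℝ, ContDiff ℝ (⊤ : ℕ∞) φ → HasCompactSupport φ →
    ∫ x, φ x ∂ν = (1 / 2) * ∫ x, f x * laplacian d φ x

namespace IsHalfLaplacian

variable {ν : Measure (EuclideanSpace ℝ (Fin d))} {f ψ : EuclideanSpace ℝ (Fin d) → ℝ}

theorem integral_smoothCutoff_mul (hν : IsHalfLaplacian ν f) (hψ : ContDiff ℝ (⊤ : ℕ∞) ψ) {c : ℝ}
    (hc : c ≠ 0) :
    ∫ y, smoothCutoff (c • y) * ψ y ∂ν =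
      (1 / 2) * ∫ y, f y * laplacian d (fun z => smoothCutoff (c • z) * ψ z) y :=
  hν _ ((contDiff_smoothCutoff.comp (contDiff_const_smul c)).mul hψ)
    (hasCompactSupport_smoothCutoff.comp_smul hc).mul_right

theorem integral_eq [IsLocallyFiniteMeasure ν] (hν : IsHalfLaplacian ν f)
    (hf : AEStronglyMeasurable f) (hψ : ContDiff ℝ (⊤ : ℕ∞) ψ) (hψ₀ : ∀ y, 0 ≤ ψ y)
    (hfψ : Integrable fun y => f y * ψ y) (hfψ' : Integrable fun y => f y * ‖fderiv ℝ ψ y‖)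
    (hfψ'' : Integrable fun y => f y * laplacian d ψ y) :
    ∫ y, ψ y ∂ν = (1 / 2) * ∫ y, f y * laplacian d ψ y := by
  have hscale_pos (n : ℕ) : 0 < 1 / ((n : ℝ) + 1) := by positivity
  let I (n : ℕ) : ℝ := ∫ y, smoothCutoff ((1 / ((n : ℝ) + 1)) • y) * ψ y ∂ν
  have hI_nonneg (n : ℕ) : 0 ≤ I n :=
    integral_nonneg fun y => mul_nonneg (smoothCutoff_nonneg _) (hψ₀ y)
  have hI_volume : Tendsto I atTop (𝓝 ((1 / 2) * ∫ y, f y * laplacian d ψ y)) := by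
    simp only [I, hν.integral_smoothCutoff_mul hψ (hscale_pos _).ne']
    exact ((tendsto_integral_mul_laplacian_comp_smul_mul hf (contDiff_smoothCutoff (n := 2))
      hasCompactSupport_smoothCutoff smoothCutoff_zero (hψ.of_le (WithTop.coe_le_coe.2 le_top)) hfψ
      hfψ' hfψ'').comp (tendsto_nhdsWithin_iff.2
        ⟨tendsto_one_div_add_atTop_nhds_zero_nat, .of_forall hscale_pos⟩)).const_mul _
  have hI_measure : Tendsto (fun n => ENNReal.ofReal (I n)) atTop
      (𝓝 (∫⁻ y, ENNReal.ofReal (ψ y) ∂ν)) := by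
    refine (tendsto_lintegral_smoothCutoff_mul ν hψ.continuous.measurable hψ₀).congr fun n => ?_
    have hcont : Continuous fun y => smoothCutoff ((1 / ((n : ℝ) + 1)) • y) * ψ y :=
      (continuous_smoothCutoff.comp (continuous_const_smul _)).mul hψ.continuous
    exact (ofReal_integral_eq_lintegral_ofReal (hcont.integrable_of_hasCompactSupport
      (hasCompactSupport_smoothCutoff.comp_smul (hscale_pos n).ne').mul_right)
      (.of_forall fun y => mul_nonneg (smoothCutoff_nonneg _) (hψ₀ y))).symm
  rw [integral_eq_lintegral_of_nonneg_ae (.of_forall hψ₀) hψ.continuous.aestronglyMeasurable,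
    tendsto_nhds_unique hI_measure (ENNReal.tendsto_ofReal hI_volume),
    ENNReal.toReal_ofReal (ge_of_tendsto' hI_volume hI_nonneg)]

end IsHalfLaplacian

end WeakEquation

section HeatKernel

variable {d : ℕ} {s : ℝ} {F : EuclideanSpace ℝ (Fin d) → ℝ}

theorem heatKernel_eq_mul_exp_neg_mul_sq_norm (y : EuclideanSpace ℝ (Fin d)) :
    heatKernel d s y =
      (2 * Real.pi * s) ^ (-(d : ℝ) / 2) * Real.exp (-(1 / (2 * s)) * ‖y‖ ^ 2) := by
  rw [heatKernel]
  ring_nf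

theorem heatKernel_nonneg (hs : 0 ≤ s) (y : EuclideanSpace ℝ (Fin d)) : 0 ≤ heatKernel d s y := by
  unfold heatKernel
  positivity

theorem heatKernel_sub_comm (x y : EuclideanSpace ℝ (Fin d)) :
    heatKernel d s (x - y) = heatKernel d s (y - x) := by
  rw [heatKernel, heatKernel, norm_sub_rev]

theorem contDiff_heatKernel {n : ℕ∞} : ContDiff ℝ n (heatKernel d s) :=
  contDiff_const.mul (((contDiff_norm_sq ℝ).neg.div_const _).exp)

theorem continuous_heatKernel : Continuous (heatKernel d s) :=
  (contDiff_heatKernel (n := 0)).continuous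

theorem hasFDerivAt_heatKernel (y : EuclideanSpace ℝ (Fin d)) :
    HasFDerivAt (heatKernel d s) (-(heatKernel d s y / s) • innerSL ℝ y) y := by
  have hexponent : HasFDerivAt (fun z : EuclideanSpace ℝ (Fin d) => -(1 / (2 * s)) * ‖z‖ ^ 2)
      (-(1 / (2 * s)) • (2 • innerSL ℝ y)) y := by
    simpa using (hasFDerivAt_id y).norm_sq.const_mul (-(1 / (2 * s)))
  have hkernel := hexponent.exp.const_mul ((2 * Real.pi * s) ^ (-(d : ℝ) / 2))
  simp only [← heatKernel_eq_mul_exp_neg_mul_sq_norm] at hkernel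
  refine hkernel.congr_fderiv ?_
  rw [heatKernel_eq_mul_exp_neg_mul_sq_norm]
  ext v
  simp only [neg_smul, smul_neg, neg_apply, smul_apply, coe_innerSL_apply, nsmul_eq_mul,
    Nat.cast_ofNat, smul_eq_mul]
  ring

theorem norm_fderiv_heatKernel (hs : 0 ≤ s) (y : EuclideanSpace ℝ (Fin d)) :
    ‖fderiv ℝ (heatKernel d s) y‖ = 1 / s * ‖y‖ * heatKernel d s y := by
  rw [(hasFDerivAt_heatKernel y).fderiv, norm_smul, norm_neg, innerSL_apply_norm,
    Real.norm_of_nonneg (div_nonneg (heatKernel_nonneg hs y) hs)]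
  ring

theorem secondPartial_heatKernel (i : Fin d) (y : EuclideanSpace ℝ (Fin d)) :
    secondPartial d (heatKernel d s) i i y = (y i ^ 2 / s ^ 2 - 1 / s) * heatKernel d s y := by
  have first_partial (z : EuclideanSpace ℝ (Fin d)) :
      fderiv ℝ (heatKernel d s) z (EuclideanSpace.single i 1) =
        -(1 / s) * (z i * heatKernel d s z) := by
    simp only [(hasFDerivAt_heatKernel z).fderiv, smul_apply, coe_innerSL_apply,
      EuclideanSpace.inner_single_right, Real.ringHom_apply, one_mul, smul_eq_mul]
    ring
  have hcoord : HasFDerivAt (fun z : EuclideanSpace ℝ (Fin d) => z i)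
      (EuclideanSpace.proj i : EuclideanSpace ℝ (Fin d) →L[ℝ] ℝ) y :=
    (EuclideanSpace.proj i : EuclideanSpace ℝ (Fin d) →L[ℝ] ℝ).hasFDerivAt
  simp only [secondPartial, first_partial]
  rw [((hcoord.fun_mul (hasFDerivAt_heatKernel y)).const_mul (-(1 / s))).fderiv]
  simp only [add_apply, smul_apply, coe_innerSL_apply, EuclideanSpace.inner_single_right,
    Real.ringHom_apply, one_mul, smul_eq_mul, PiLp.proj_apply, PiLp.single_eq_same, mul_one]
  ring

theorem laplacian_heatKernel (y : EuclideanSpace ℝ (Fin d)) :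
    laplacian d (heatKernel d s) y = (1 / s ^ 2 * ‖y‖ ^ 2 - d / s) * heatKernel d s y := by
  simp only [laplacian, secondPartial_heatKernel, ← Finset.sum_mul, Finset.sum_sub_distrib,
    ← Finset.sum_div, EuclideanSpace.real_norm_sq_eq, Finset.sum_const, Finset.card_univ,
    Fintype.card_fin, nsmul_eq_mul]
  ring

theorem hasDerivAt_heatKernel (hs : 0 < s) (y : EuclideanSpace ℝ (Fin d)) :
    HasDerivAt (fun r => heatKernel d r y) ((1 / 2) * laplacian d (heatKernel d s) y) s := by
  have hp : 0 < 2 * Real.pi * s := by positivity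
  have hprefactor : HasDerivAt (fun r => (2 * Real.pi * r) ^ (-(d : ℝ) / 2))
      (-(d / (2 * s)) * (2 * Real.pi * s) ^ (-(d : ℝ) / 2)) s := by
    refine (((hasDerivAt_id' s).const_mul (2 * Real.pi)).rpow_const (p := -(d : ℝ) / 2)
      (Or.inl hp.ne')).congr_deriv ?_
    rw [Real.rpow_sub_one hp.ne']
    field_simp
  have hexponent : HasDerivAt (fun r => -‖y‖ ^ 2 / (2 * r)) (‖y‖ ^ 2 / (2 * s ^ 2)) s := by
    refine ((hasDerivAt_const s (-‖y‖ ^ 2)).fun_div ((hasDerivAt_id' s).const_mul 2)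
      (by positivity)).congr_deriv ?_
    field_simp
    ring
  refine (hprefactor.mul hexponent.exp).congr_deriv ?_
  rw [laplacian_heatKernel, heatKernel]
  field_simp
  ring

theorem integral_heatKernel (hs : 0 < s) : ∫ y, heatKernel d s y = 1 := by
  simp only [heatKernel_eq_mul_exp_neg_mul_sq_norm, integral_const_mul]
  rw [GaussianFourier.integral_rexp_neg_mul_sq_norm (by positivity), finrank_euclideanSpace_fin,
    show Real.pi / (1 / (2 * s)) = 2 * Real.pi * s by field_simp, ← Real.rpow_add (by positivity)]
  simp [neg_div]

theorem heatKernel_sqrt_smul (hs : 0 < s) (y : EuclideanSpace ℝ (Fin d)) :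
    heatKernel d s (√s • y) = (√s ^ d)⁻¹ * heatKernel d 1 y := by
  have sqrt_pow : √s ^ d = s ^ ((d : ℝ) / 2) := by
    rw [Real.sqrt_eq_rpow, ← Real.rpow_natCast, ← Real.rpow_mul hs.le]
    ring_nf
  have exponent_eq : -(s * ‖y‖ ^ 2) / (2 * s) = -‖y‖ ^ 2 / (2 * 1) := by field_simp
  rw [heatKernel, heatKernel, norm_smul, mul_pow, Real.norm_of_nonneg (Real.sqrt_nonneg s),
    Real.sq_sqrt hs.le, exponent_eq, Real.mul_rpow (by positivity) hs.le, sqrt_pow, neg_div,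
    Real.rpow_neg hs.le, mul_one]
  ring_nf

theorem integral_mul_heatKernel_eq_integral_comp_sqrt_smul
    (F : EuclideanSpace ℝ (Fin d) → ℝ) (hs : 0 < s) :
    ∫ y, F y * heatKernel d s y = ∫ y, F (√s • y) * heatKernel d 1 y := by
  have hpow : √s ^ d ≠ 0 := by positivity
  have hscale := Measure.integral_comp_smul_of_nonneg volume (fun y => F y * heatKernel d s y) √s
    (hR := Real.sqrt_nonneg s)
  simp only [heatKernel_sqrt_smul hs, finrank_euclideanSpace_fin, smul_eq_mul,
    mul_left_comm (F _), integral_const_mul] at hscale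
  exact (mul_left_cancel₀ (inv_ne_zero hpow) hscale).symm

theorem heatKernel_le_of_le {a b : ℝ} (ha : 0 < a) (has : a ≤ s) (hsb : s ≤ b)
    (y : EuclideanSpace ℝ (Fin d)) :
    heatKernel d s y ≤ (a / b) ^ (-(d : ℝ) / 2) * heatKernel d b y := by
  have hs : 0 < s := ha.trans_le has
  have hb : 0 < b := hs.trans_le hsb
  have hd : -(d : ℝ) / 2 ≤ 0 := by linarith [d.cast_nonneg (α := ℝ)]
  calc heatKernel d s y
      ≤ (2 * Real.pi * a) ^ (-(d : ℝ) / 2) * Real.exp (-(1 / (2 * b)) * ‖y‖ ^ 2) := by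
        rw [heatKernel_eq_mul_exp_neg_mul_sq_norm]
        gcongr ?_ * Real.exp (-(1 / (2 * ?_)) * _)
        exact Real.rpow_le_rpow_of_nonpos (by positivity) (by gcongr) hd
    _ = (a / b) ^ (-(d : ℝ) / 2) * heatKernel d b y := by
        rw [heatKernel_eq_mul_exp_neg_mul_sq_norm, ← mul_assoc,
          ← Real.mul_rpow (by positivity) (by positivity)]
        congr 2
        field_simp

theorem abs_laplacian_heatKernel_le {a b : ℝ} (ha : 0 < a) (has : a ≤ s) (hsb : s ≤ b)
    (y : EuclideanSpace ℝ (Fin d)) :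
    |laplacian d (heatKernel d s) y| ≤
      (1 / a ^ 2 * ‖y‖ ^ 2 - -(d / a)) * ((a / b) ^ (-(d : ℝ) / 2) * heatKernel d b y) := by
  have hs : 0 < s := ha.trans_le has
  have factor_le : |1 / s ^ 2 * ‖y‖ ^ 2 - d / s| ≤ 1 / a ^ 2 * ‖y‖ ^ 2 - -(d / a) := by
    calc |1 / s ^ 2 * ‖y‖ ^ 2 - d / s| ≤ |1 / s ^ 2 * ‖y‖ ^ 2| + |d / s| := abs_sub _ _
      _ = 1 / s ^ 2 * ‖y‖ ^ 2 + d / s := by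
        rw [abs_of_nonneg (by positivity), abs_of_nonneg (by positivity)]
      _ ≤ 1 / a ^ 2 * ‖y‖ ^ 2 + d / a := by gcongr
      _ = _ := by ring
  rw [laplacian_heatKernel, abs_mul, abs_of_nonneg (heatKernel_nonneg hs.le y)]
  exact mul_le_mul factor_le (heatKernel_le_of_le ha has hsb y) (heatKernel_nonneg hs.le y)
    ((abs_nonneg _).trans factor_le)

namespace PolynomiallyBounded

theorem integrable_mul_heatKernel (hF : PolynomiallyBounded F) (hFm : AEStronglyMeasurable F)
    (hs : 0 < s) : Integrable fun y => F y * heatKernel d s y := by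
  refine ((hF.integrable_mul_exp_neg_mul_sq_norm hFm (b := 1 / (2 * s)) (by positivity)).const_mul
    ((2 * Real.pi * s) ^ (-(d : ℝ) / 2))).congr (.of_forall fun y => ?_)
  simp only [heatKernel_eq_mul_exp_neg_mul_sq_norm]
  ring

theorem integrable_mul_norm_fderiv_heatKernel (hF : PolynomiallyBounded F)
    (hFm : AEStronglyMeasurable F) (hs : 0 < s) :
    Integrable fun y => F y * ‖fderiv ℝ (heatKernel d s) y‖ := by
  have hnorm : PolynomiallyBounded fun y : EuclideanSpace ℝ (Fin d) => 1 / s * ‖y‖ :=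
    .of_abs_le_linear (A := 1 / s) (B := 0) fun y => by
      rw [add_zero, abs_of_nonneg (by positivity)]
  simpa only [norm_fderiv_heatKernel hs.le, mul_assoc] using
    (hF.mul hnorm).integrable_mul_heatKernel (hFm.mul (by fun_prop)) hs

theorem integrable_mul_laplacian_heatKernel (hF : PolynomiallyBounded F)
    (hFm : AEStronglyMeasurable F) (hs : 0 < s) :
    Integrable fun y => F y * laplacian d (heatKernel d s) y := by
  simpa only [laplacian_heatKernel, mul_assoc] using
    (hF.mul (mul_norm_sq_sub (1 / s ^ 2) (d / s))).integrable_mul_heatKernel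
      (hFm.mul (by fun_prop)) hs

theorem hasDerivAt_integral_mul_heatKernel (hF : PolynomiallyBounded F)
    (hFm : AEStronglyMeasurable F) (hs : 0 < s) :
    HasDerivAt (fun r => ∫ y, F y * heatKernel d r y)
      ((1 / 2) * ∫ y, F y * laplacian d (heatKernel d s) y) s := by
  let weight (y : EuclideanSpace ℝ (Fin d)) : ℝ := 1 / (s / 2) ^ 2 * ‖y‖ ^ 2 - -(d / (s / 2))
  have hbound : Integrable fun y => F y * weight y * heatKernel d (2 * s) y :=
    (hF.mul (mul_norm_sq_sub _ _)).integrable_mul_heatKernel (hFm.mul (by fun_prop)) (by positivity)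
  rw [← integral_const_mul]
  refine ((hasDerivAt_integral_of_dominated_loc_of_deriv_le
    (F := fun r y => F y * heatKernel d r y)
    (Ioo_mem_nhds (half_lt_self hs) (by linarith : s < 2 * s))
    (.of_forall fun r => hFm.mul continuous_heatKernel.aestronglyMeasurable)
    (hF.integrable_mul_heatKernel hFm hs)
    (F' := fun r y => (1 / 2) * (F y * laplacian d (heatKernel d r) y))
    ((hF.integrable_mul_laplacian_heatKernel hFm hs).const_mul _).aestronglyMeasurable
    (.of_forall fun y r hr => ?_)
    (hbound.norm.const_mul ((1 / 2) * (s / 2 / (2 * s)) ^ (-(d : ℝ) / 2)))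
    (.of_forall fun y r hr => ?_))).2
  · have hK : 0 ≤ heatKernel d (2 * s) y := heatKernel_nonneg (by positivity) y
    have hw : 0 ≤ weight y := by simp only [weight, sub_neg_eq_add]; positivity
    have hΔ : |laplacian d (heatKernel d r) y| ≤
        weight y * ((s / 2 / (2 * s)) ^ (-(d : ℝ) / 2) * heatKernel d (2 * s) y) :=
      abs_laplacian_heatKernel_le (by positivity) hr.1.le hr.2.le y
    simp only [norm_mul, Real.norm_eq_abs, abs_of_nonneg hK, abs_of_nonneg hw]
    rw [abs_of_pos one_half_pos]
    calc (1 / 2) * (|F y| * |laplacian d (heatKernel d r) y|)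
        ≤ (1 / 2) * (|F y| *
            (weight y * ((s / 2 / (2 * s)) ^ (-(d : ℝ) / 2) * heatKernel d (2 * s) y))) := by gcongr
      _ = _ := by ring
  · have hr₀ : 0 < r := (half_pos hs).trans hr.1
    exact ((hasDerivAt_heatKernel hr₀ y).const_mul (F y)).congr_deriv (by ring)

theorem tendsto_integral_mul_heatKernel (hF : PolynomiallyBounded F)
    (hFm : AEStronglyMeasurable F) (hF₀ : ContinuousAt F 0) :
    Tendsto (fun s => ∫ y, F y * heatKernel d s y) (𝓝[>] 0) (𝓝 (F 0)) := by
  obtain ⟨C, k, hC, hFbound⟩ := hF.exists_nonneg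
  have hlimit : ∫ y, F 0 * heatKernel d 1 y = F 0 := by
    rw [integral_const_mul, integral_heatKernel one_pos, mul_one]
  have hpow : PolynomiallyBounded fun y : EuclideanSpace ℝ (Fin d) => C * (1 + ‖y‖) ^ k :=
    ⟨C, k, fun y => (abs_of_nonneg (by positivity)).le⟩
  rw [← hlimit]
  refine Tendsto.congr' (eventually_nhdsWithin_of_forall fun s hs =>
    (integral_mul_heatKernel_eq_integral_comp_sqrt_smul F hs).symm) ?_
  refine tendsto_integral_filter_of_dominated_convergence
    (fun y => C * (1 + ‖y‖) ^ k * heatKernel d 1 y) ?_ ?_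
    (hpow.integrable_mul_heatKernel (by fun_prop) one_pos) (.of_forall fun y => ?_)
  · filter_upwards [self_mem_nhdsWithin] with s hs
    have hmap : Measure.QuasiMeasurePreserving
        (fun y : EuclideanSpace ℝ (Fin d) => √s • y) volume volume :=
      Measure.quasiMeasurePreserving_smul volume (Real.sqrt_pos.2 hs).ne'
    exact (hFm.comp_quasiMeasurePreserving hmap).mul
      continuous_heatKernel.aestronglyMeasurable
  · filter_upwards [Ioc_mem_nhdsGT one_pos] with s hs
    refine .of_forall fun y => ?_
    have hK := heatKernel_nonneg zero_le_one y
    have hnorm : ‖√s • y‖ ≤ ‖y‖ := by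
      rw [norm_smul, Real.norm_of_nonneg (Real.sqrt_nonneg s)]
      exact mul_le_of_le_one_left (norm_nonneg y) (Real.sqrt_le_one.2 hs.2)
    rw [norm_mul, Real.norm_of_nonneg hK, Real.norm_eq_abs]
    gcongr
    exact (hFbound _).trans (by gcongr)
  · have hsmul : Tendsto (fun s => √s • y) (𝓝[>] 0) (𝓝 0) :=
      (Continuous.tendsto' (by fun_prop) _ _ (by simp)).mono_left nhdsWithin_le_nhds
    exact (hF₀.tendsto.comp hsmul).mul_const _

end PolynomiallyBounded

theorem IsHalfLaplacian.integral_heatKernel_sub {ν : Measure (EuclideanSpace ℝ (Fin d))}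
    [IsLocallyFiniteMeasure ν] {f : EuclideanSpace ℝ (Fin d) → ℝ} (hν : IsHalfLaplacian ν f)
    (hf : PolynomiallyBounded f) (hfm : AEStronglyMeasurable f) (hs : 0 < s)
    (x : EuclideanSpace ℝ (Fin d)) :
    ∫ y, heatKernel d s (x - y) ∂ν =
      (1 / 2) * ∫ y, f (x + y) * laplacian d (heatKernel d s) y := by
  have hfx := hf.comp_const_add x
  have hfxm : AEStronglyMeasurable fun y => f (x + y) :=
    hfm.comp_measurePreserving (measurePreserving_add_left volume x)
  have hweak := hν.integral_eq hfm (ψ := fun y => heatKernel d s (y - x))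
    (contDiff_heatKernel.comp (contDiff_id.sub contDiff_const))
    (fun y => heatKernel_nonneg hs.le _)
    (by simpa using (hfx.integrable_mul_heatKernel hfxm hs).comp_sub_right x)
    (by simpa [fderiv_comp_sub] using
      (hfx.integrable_mul_norm_fderiv_heatKernel hfxm hs).comp_sub_right x)
    (by simpa [laplacian_comp_sub] using
      (hfx.integrable_mul_laplacian_heatKernel hfxm hs).comp_sub_right x)
  simp only [heatKernel_sub_comm x, hweak, laplacian_comp_sub]
  rw [← integral_add_left_eq_self _ x]
  simp only [add_sub_cancel_left]

end HeatKernel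

theorem integral_eq_sub_of_hasDerivAt_of_nonneg_of_tendsto {u u' : ℝ → ℝ} {a b ua ub : ℝ}
    (hab : a < b) (hderiv : ∀ s ∈ Set.Ioo a b, HasDerivAt u (u' s) s)
    (hnonneg : ∀ s ∈ Set.Ioo a b, 0 ≤ u' s) (ha : Tendsto u (𝓝[>] a) (𝓝 ua))
    (hb : Tendsto u (𝓝[<] b) (𝓝 ub)) : ∫ s in a..b, u' s = ub - ua := by
  have hucont : ContinuousOn u (Set.Ioo a b) := fun s hs =>
    (hderiv s hs).continuousAt.continuousWithinAt
  have hcont := continuousOn_Icc_extendFrom_Ioo hucont ha hb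
  have hderiv' (s) (hs : s ∈ Set.Ioo a b) : HasDerivAt (extendFrom (Set.Ioo a b) u) (u' s) s :=
    (hderiv s hs).congr_of_eventuallyEq <|
      eventuallyEq_of_mem (Ioo_mem_nhds hs.1 hs.2) (extendFrom_extends hucont)
  have hint := intervalIntegral.integrableOn_deriv_of_nonneg hcont hderiv' hnonneg
  exact intervalIntegral.integral_eq_sub_of_hasDerivAt_of_tendsto hab hderiv
    ((intervalIntegrable_iff_integrableOn_Ioc_of_le hab.le).2 hint) ha hb

theorem heat_semigroup_increment_formula_general {d : ℕ} {f : EuclideanSpace ℝ (Fin d) → ℝ}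
    (hf : PolynomiallyBounded f) (hfm : AEStronglyMeasurable f)
    {ν : Measure (EuclideanSpace ℝ (Fin d))} [IsLocallyFiniteMeasure ν] (hν : IsHalfLaplacian ν f)
    {x : EuclideanSpace ℝ (Fin d)} (hx : ContinuousAt f x) {t : ℝ} (ht : 0 < t) :
    (∫ y, f (x + y) * heatKernel d t y) - f x =
      ∫ s in (0 : ℝ)..t, ∫ y, heatKernel d s (x - y) ∂ν := by
  have hfx := hf.comp_const_add x
  have hfxm : AEStronglyMeasurable fun y => f (x + y) :=
    hfm.comp_measurePreserving (measurePreserving_add_left volume x)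
  have hfx₀ : ContinuousAt (fun y => f (x + y)) 0 :=
    ContinuousAt.comp (by simpa using hx) (by fun_prop)
  have hderiv (s : ℝ) (hs : 0 < s) : HasDerivAt (fun r => ∫ y, f (x + y) * heatKernel d r y)
      (∫ y, heatKernel d s (x - y) ∂ν) s := by
    rw [hν.integral_heatKernel_sub hf hfm hs]
    exact hfx.hasDerivAt_integral_mul_heatKernel hfxm hs
  have hinitial : Tendsto (fun s => ∫ y, f (x + y) * heatKernel d s y) (𝓝[>] 0) (𝓝 (f x)) := by
    simpa using hfx.tendsto_integral_mul_heatKernel hfxm hfx₀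
  exact (integral_eq_sub_of_hasDerivAt_of_nonneg_of_tendsto ht (fun s hs => hderiv s hs.1)
    (fun s hs => integral_nonneg fun y => heatKernel_nonneg hs.1.le _) hinitial
    ((hderiv t ht).continuousAt.tendsto.mono_left nhdsWithin_le_nhds)).symm

theorem heat_semigroup_increment_formula (d : ℕ)
    (f : EuclideanSpace ℝ (Fin d) → ℝ) (hf : ConvexOn ℝ Set.univ f)
    (A B : ℝ) (hgrowth : ∀ y, |f y| ≤ A * ‖y‖ + B)
    (ν : Measure (EuclideanSpace ℝ (Fin d))) (hνfin : IsLocallyFiniteMeasure ν)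
    (hν : ∀ φ : EuclideanSpace ℝ (Fin d) → ℝ, ContDiff ℝ (⊤ : ℕ∞) φ → HasCompactSupport φ →
      (∫ x, φ x ∂ν) = (1 / 2) * ∫ x, f x * laplacian d φ x) :
    ∀ᵐ x ∂(volume : Measure (EuclideanSpace ℝ (Fin d))), ∀ t : ℝ, 0 < t →
      (1 / t) * ((∫ y, f (x + y) * heatKernel d t y) - f x) =
        (1 / t) * ∫ s in (0:ℝ)..t, ∫ y, heatKernel d s (x - y) ∂ν := by
  have hfc : Continuous f := hf.locallyLipschitz.continuous
  exact .of_forall fun x t ht => congrArg (1 / t * ·) <| heat_semigroup_increment_formula_general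
    (.of_abs_le_linear hgrowth) hfc.aestronglyMeasurable hν hfc.continuousAt ht
end
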